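/- Let (X,T) be a distal minimal topological dynamical system and let (x0,x1,x2,x3) ∈ X⁴. Then (x0,x1,x2,x3) ∈ 𝒫 if and only if there exist two sequences of integers (m_i) and (n_i) such that T^{m_i} x0 → x1, T^{n_i} x0 → x2 and T^{m_i+n_i} x0 → x3 as i → ∞. -/

import Mathlib

open Filter Topology

/-- The `n`-th iterate (`n : ℤ`) of a homeomorphism `T : X → X`. -/
def iterZ {X : Type*} [TopologicalSpace X] (T : X ≃ₜ X) (n : ℤ) : X → X :=
  fun x => (T.toEquiv ^ n) x

section Defs

variable {X : Type*} [TopologicalSpace X]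

/-- The set of parallelograms `𝒫`: the closure in `X⁴` of
`{(x, Tᵐx, Tⁿx, Tᵐ⁺ⁿx) : x ∈ X, m, n ∈ ℤ}`. -/
def Para (T : X ≃ₜ X) : Set (X × X × X × X) :=
  closure {q | ∃ (x : X) (m n : ℤ),
    q = (x, iterZ T m x, iterZ T n x, iterZ T (m + n) x)}

/-- The set of parallelepipeds `𝒬`: the closure in `X⁸ = X⁴ × X⁴` of
`{(x, Tᵐx, Tⁿx, Tᵐ⁺ⁿx, Tᵖx, Tᵐ⁺ᵖx, Tⁿ⁺ᵖx, Tᵐ⁺ⁿ⁺ᵖx) : x ∈ X, m, n, p ∈ ℤ}`. -/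
def Pip (T : X ≃ₜ X) : Set ((X × X × X × X) × (X × X × X × X)) :=
  closure {q | ∃ (x : X) (m n p : ℤ),
    q = ((x, iterZ T m x, iterZ T n x, iterZ T (m + n) x),
         (iterZ T p x, iterZ T (m + p) x, iterZ T (n + p) x, iterZ T (m + n + p) x))}

end Defs

section MetricDefs

variable {X : Type*} [MetricSpace X]

/-- `(X, T)` is transitive: some point has dense orbit `{Tⁿx : n ∈ ℤ}`. -/
def IsTransitive (T : X ≃ₜ X) : Prop :=
  ∃ x : X, Dense (Set.range fun n : ℤ => iterZ T n x)

/-- `(X, T)` is minimal: every point has dense orbit. -/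
def IsMinimal (T : X ≃ₜ X) : Prop :=
  ∀ x : X, Dense (Set.range fun n : ℤ => iterZ T n x)

/-- `(x, y)` is a proximal pair: `inf_{n ∈ ℤ} d(Tⁿx, Tⁿy) = 0`. -/
def ProximalPair (T : X ≃ₜ X) (x y : X) : Prop :=
  ⨅ n : ℤ, dist (iterZ T n x) (iterZ T n y) = 0

/-- `(X, T)` is distal: every pair of distinct points is distal,
i.e. `inf_{n ∈ ℤ} d(Tⁿx, Tⁿy) > 0`. -/
def IsDistal (T : X ≃ₜ X) : Prop :=
  ∀ x y : X, x ≠ y → 0 < ⨅ n : ℤ, dist (iterZ T n x) (iterZ T n y)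

/-- The regionally proximal relation `RP`. -/
def RP (T : X ≃ₜ X) (x y : X) : Prop :=
  ∀ ε > 0, ∃ x' y' : X, ∃ n : ℤ,
    dist x' x < ε ∧ dist y' y < ε ∧ dist (iterZ T n x') (iterZ T n y') < ε

/-- The doubly regionally proximal relation `RP²`. -/
def RP2 (T : X ≃ₜ X) (x y : X) : Prop :=
  ∀ ε > 0, ∃ x' y' : X, ∃ m n : ℤ,
    dist x' x < ε ∧ dist y' y < ε ∧
    dist (iterZ T m x') (iterZ T m y') < ε ∧
    dist (iterZ T n x') (iterZ T n y') < ε ∧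
    dist (iterZ T (m + n) x') (iterZ T (m + n) y') < ε

/-- The strongly doubly regionally proximal relation `RP²ₛ`. -/
def RP2S (T : X ≃ₜ X) (x y : X) : Prop :=
  ∀ ε > 0, ∃ x' y' : X, ∃ m n : ℤ,
    dist x' x < ε ∧ dist y' y < ε ∧
    dist (iterZ T m x') y < ε ∧ dist (iterZ T n x') y < ε ∧
    dist (iterZ T (m + n) x') y < ε ∧
    dist (iterZ T m y') y < ε ∧ dist (iterZ T n y') y < ε ∧
    dist (iterZ T (m + n) y') y < ε

end MetricDefs

theorem iterZ_add' {X : Type*} [TopologicalSpace X] (T : X ≃ₜ X) (a b : ℤ) (x : X) :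
    iterZ T (a + b) x = iterZ T a (iterZ T b x) := by
  simp [iterZ, zpow_add]

theorem iterZ_zero' {X : Type*} [TopologicalSpace X] (T : X ≃ₜ X) (x : X) :
    iterZ T 0 x = x := by
  simp [iterZ]

theorem iterZ_one' {X : Type*} [TopologicalSpace X] (T : X ≃ₜ X) :
    iterZ T 1 = T := by
  ext x; simp [iterZ]

theorem iterZ_cont {X : Type*} [TopologicalSpace X] (T : X ≃ₜ X) (a : ℤ) :
    Continuous (iterZ T a) := by
  have hneg : iterZ T (-1) = T.symm := by
    ext x; simp [iterZ]
  induction a using Int.induction_on with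
  | zero => exact continuous_id.congr fun x => (iterZ_zero' T x).symm
  | succ n ih =>
    have := ih.comp T.continuous
    refine this.congr fun x => ?_
    rw [iterZ_add', iterZ_one']; rfl
  | pred n ih =>
    have := ih.comp T.symm.continuous
    refine this.congr fun x => ?_
    rw [sub_eq_add_neg, iterZ_add', hneg]; rfl

theorem ellis_symm {Z : Type*} [TopologicalSpace Z] [CompactSpace Z] [T2Space Z]
    (M : Set (Z → Z)) (hne : M.Nonempty) (hc : ∀ f ∈ M, Continuous f)
    (hcomp : ∀ f ∈ M, ∀ g ∈ M, f ∘ g ∈ M)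
    (hd : ∀ x y z : Z, (z, z) ∈ closure {p : Z × Z | ∃ f ∈ M, p = (f x, f y)} → x = y)
    (x y : Z) (hy : y ∈ closure {z | ∃ f ∈ M, z = f x}) :
    x ∈ closure {z | ∃ f ∈ M, z = f y} := by
  have hEc : IsCompact (closure M) := isClosed_closure.isCompact
  have hev : ∀ a : Z, Continuous fun f : Z → Z => f a := fun a => continuous_apply a
  have hEx : ∀ a : Z, ∀ p ∈ closure M, p a ∈ closure {z | ∃ f ∈ M, z = f a} := by
    intro a p hp
    exact map_mem_closure (f := fun f : Z → Z => f a) (hev a) hp (fun f hf => ⟨f, hf, rfl⟩)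
  obtain ⟨p, hp, hpx⟩ : ∃ p ∈ closure M, p x = y := by
    have h1 : IsClosed ((fun f : Z → Z => f x) '' closure M) := (hEc.image (hev x)).isClosed
    have h2 : {z | ∃ f ∈ M, z = f x} ⊆ (fun f : Z → Z => f x) '' closure M := by
      rintro _ ⟨f, hf, rfl⟩
      exact ⟨f, subset_closure hf, rfl⟩
    exact closure_minimal h2 h1 hy
  have hright : ∀ r : Z → Z, Continuous fun f : Z → Z => f ∘ r := fun r =>
    continuous_pi fun a => continuous_apply (r a)
  have hEE : ∀ f ∈ closure M, ∀ g ∈ closure M, f ∘ g ∈ closure M := by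
    have step : ∀ f ∈ M, ∀ g ∈ closure M, f ∘ g ∈ closure M := by
      intro f hf g hg
      have : Continuous fun g : Z → Z => f ∘ g :=
        continuous_pi fun a => (hc f hf).comp (continuous_apply a)
      exact map_mem_closure this hg (fun g hg => hcomp f hf g hg)
    intro f hf g hg
    have := map_mem_closure (hright g) hf (fun f hf => step f hf g hg)
    rwa [closure_closure] at this
  let _ : Semigroup (Z → Z) := { mul := fun f g => f ∘ g, mul_assoc := fun _ _ _ => rfl }
  obtain ⟨u, hu, huu⟩ := exists_idempotent_in_compact_subsemigroup (M := Z → Z)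
    (fun r => hright r) ((fun q : Z → Z => q ∘ p) '' closure M)
    (hne.closure.image _) (hEc.image (hright p)) (by
      rintro _ ⟨f, hf, rfl⟩ _ ⟨g, hg, rfl⟩
      exact ⟨f ∘ p ∘ g, hEE _ hf _ (hEE _ hp _ hg), rfl⟩)
  obtain ⟨q, hq, rfl⟩ := hu
  have huM : q ∘ p ∈ closure M := hEE _ hq _ hp
  have hid : x = q (p x) := by
    have huu' : q (p (q (p x))) = q (p x) := congrFun huu x
    apply hd x (q (p x)) (q (p x))
    have h3 : Continuous fun f : Z → Z => (f x, f (q (p x))) := (hev _).prodMk (hev _)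
    have := map_mem_closure h3 huM
      (t := {r : Z × Z | ∃ f ∈ M, r = (f x, f (q (p x)))}) (fun f hf => ⟨f, hf, rfl⟩)
    simpa [huu'] using this
  rw [hpx] at hid
  rw [hid]
  exact hEx y q hq |> fun h => by simpa [← hid] using h

theorem distal_aux {X : Type*} [MetricSpace X] (T : X ≃ₜ X) (hdistal : IsDistal T)
    (x y z : X) (h : (z, z) ∈ closure {p : X × X | ∃ k : ℤ, p = (iterZ T k x, iterZ T k y)}) :
    x = y := by
  by_contra hne
  have h0 := hdistal x y hne
  set δ := ⨅ n : ℤ, dist (iterZ T n x) (iterZ T n y)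
  have hcl : IsClosed {p : X × X | δ ≤ dist p.1 p.2} :=
    isClosed_le continuous_const continuous_dist
  have hsub : {p : X × X | ∃ k : ℤ, p = (iterZ T k x, iterZ T k y)} ⊆
      {p : X × X | δ ≤ dist p.1 p.2} := by
    rintro _ ⟨k, rfl⟩
    have hb : BddBelow (Set.range fun n : ℤ => dist (iterZ T n x) (iterZ T n y)) :=
      ⟨0, by rintro _ ⟨n, rfl⟩; exact dist_nonneg⟩
    exact ciInf_le hb k
  have := closure_minimal hsub hcl h
  simp at this
  linarith

/-- Orbit closure of a pair under `T × T`. -/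
def orb2 {X : Type*} [TopologicalSpace X] (T : X ≃ₜ X) (a : X × X) : Set (X × X) :=
  closure {z | ∃ k : ℤ, z = (iterZ T k a.1, iterZ T k a.2)}

/-- Orbit closure of a triple under the face transformations. -/
def orb3 {X : Type*} [TopologicalSpace X] (T : X ≃ₜ X) (a : X × X × X) : Set (X × X × X) :=
  closure {z | ∃ m n : ℤ, z = (iterZ T m a.1, iterZ T n a.2.1, iterZ T (m + n) a.2.2)}

theorem orb2_symm {X : Type*} [MetricSpace X] [CompactSpace X] (T : X ≃ₜ X)
    (hdistal : IsDistal T) (a b : X × X) (h : b ∈ orb2 T a) : a ∈ orb2 T b := by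
  have key := ellis_symm (Z := X × X)
    {f | ∃ k : ℤ, f = fun a => (iterZ T k a.1, iterZ T k a.2)} ⟨_, 0, rfl⟩ ?_ ?_ ?_ a b ?_
  · refine closure_mono ?_ key
    rintro _ ⟨_, ⟨k, rfl⟩, rfl⟩
    exact ⟨k, rfl⟩
  · rintro _ ⟨k, rfl⟩
    have := iterZ_cont T k
    fun_prop
  · rintro _ ⟨k, rfl⟩ _ ⟨l, rfl⟩
    refine ⟨k + l, ?_⟩
    ext z <;> simp [iterZ_add']
  · intro x y z hz
    ext
    · refine distal_aux T hdistal _ _ z.1 ?_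
      refine map_mem_closure (f := fun p : (X × X) × (X × X) => (p.1.1, p.2.1))
        (by fun_prop) hz ?_
      rintro _ ⟨_, ⟨k, rfl⟩, rfl⟩
      exact ⟨k, rfl⟩
    · refine distal_aux T hdistal _ _ z.2 ?_
      refine map_mem_closure (f := fun p : (X × X) × (X × X) => (p.1.2, p.2.2))
        (by fun_prop) hz ?_
      rintro _ ⟨_, ⟨k, rfl⟩, rfl⟩
      exact ⟨k, rfl⟩
  · refine closure_mono ?_ h
    rintro _ ⟨k, rfl⟩
    exact ⟨_, ⟨k, rfl⟩, rfl⟩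

theorem orb3_symm {X : Type*} [MetricSpace X] [CompactSpace X] (T : X ≃ₜ X)
    (hdistal : IsDistal T) (a b : X × X × X) (h : b ∈ orb3 T a) : a ∈ orb3 T b := by
  have key := ellis_symm (Z := X × X × X)
    {f | ∃ m n : ℤ, f = fun a => (iterZ T m a.1, iterZ T n a.2.1, iterZ T (m + n) a.2.2)}
    ⟨_, 0, 0, rfl⟩ ?_ ?_ ?_ a b ?_
  · refine closure_mono ?_ key
    rintro _ ⟨_, ⟨m, n, rfl⟩, rfl⟩
    exact ⟨m, n, rfl⟩
  · rintro _ ⟨m, n, rfl⟩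
    have := iterZ_cont T m
    have := iterZ_cont T n
    have := iterZ_cont T (m + n)
    fun_prop
  · rintro _ ⟨k, l, rfl⟩ _ ⟨m, n, rfl⟩
    refine ⟨k + m, l + n, ?_⟩
    have e : k + m + (l + n) = (k + l) + (m + n) := by ring
    rw [e]
    ext z
    · simp [iterZ_add' T k m]
    · simp [iterZ_add' T l n]
    · simp [iterZ_add' T (k + l) (m + n)]
  · intro x y z hz
    ext
    · refine distal_aux T hdistal _ _ z.1 ?_
      refine map_mem_closure (f := fun p : (X × X × X) × (X × X × X) => (p.1.1, p.2.1))
        (by fun_prop) hz ?_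
      rintro _ ⟨_, ⟨m, n, rfl⟩, rfl⟩
      exact ⟨m, rfl⟩
    · refine distal_aux T hdistal _ _ z.2.1 ?_
      refine map_mem_closure (f := fun p : (X × X × X) × (X × X × X) => (p.1.2.1, p.2.2.1))
        (by fun_prop) hz ?_
      rintro _ ⟨_, ⟨m, n, rfl⟩, rfl⟩
      exact ⟨n, rfl⟩
    · refine distal_aux T hdistal _ _ z.2.2 ?_
      refine map_mem_closure (f := fun p : (X × X × X) × (X × X × X) => (p.1.2.2, p.2.2.2))
        (by fun_prop) hz ?_
      rintro _ ⟨_, ⟨m, n, rfl⟩, rfl⟩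
      exact ⟨m + n, rfl⟩
  · refine closure_mono ?_ h
    rintro _ ⟨m, n, rfl⟩
    exact ⟨_, ⟨m, n, rfl⟩, rfl⟩

theorem orb2_trans {X : Type*} [TopologicalSpace X] (T : X ≃ₜ X)
    (a b c : X × X) (hab : b ∈ orb2 T a) (hbc : c ∈ orb2 T b) : c ∈ orb2 T a := by
  refine closure_minimal ?_ isClosed_closure hbc
  rintro _ ⟨k, rfl⟩
  have := iterZ_cont T k
  refine map_mem_closure (f := fun z : X × X => (iterZ T k z.1, iterZ T k z.2))
    (by fun_prop) hab ?_
  rintro _ ⟨l, rfl⟩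
  exact ⟨k + l, by simp [iterZ_add']⟩

theorem orb3_trans {X : Type*} [TopologicalSpace X] (T : X ≃ₜ X)
    (a b c : X × X × X) (hab : b ∈ orb3 T a) (hbc : c ∈ orb3 T b) : c ∈ orb3 T a := by
  refine closure_minimal ?_ isClosed_closure hbc
  rintro _ ⟨k, l, rfl⟩
  have := iterZ_cont T k
  have := iterZ_cont T l
  have := iterZ_cont T (k + l)
  refine map_mem_closure
    (f := fun z : X × X × X => (iterZ T k z.1, iterZ T l z.2.1, iterZ T (k + l) z.2.2))
    (by fun_prop) hab ?_
  rintro _ ⟨m, n, rfl⟩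
  refine ⟨k + m, l + n, ?_⟩
  have e : k + m + (l + n) = (k + l) + (m + n) := by ring
  rw [e, iterZ_add' T k m, iterZ_add' T l n, iterZ_add' T (k + l) (m + n)]

/-- `𝒫` is stable under the face transformations fixing the first coordinate. -/
theorem para_orb3 {X : Type*} [TopologicalSpace X] (T : X ≃ₜ X) (x : X)
    (a b : X × X × X) (ha : (x, a) ∈ Para T) (hb : b ∈ orb3 T a) : (x, b) ∈ Para T := by
  have : Set.MapsTo (fun z : X × X × X => (x, z))
      {z | ∃ m n : ℤ, z = (iterZ T m a.1, iterZ T n a.2.1, iterZ T (m + n) a.2.2)}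
      (Para T) := by
    rintro _ ⟨k, l, rfl⟩
    have := iterZ_cont T k
    have := iterZ_cont T l
    have := iterZ_cont T (k + l)
    refine map_mem_closure (f := fun z : X × X × X × X =>
      (z.1, iterZ T k z.2.1, iterZ T l z.2.2.1, iterZ T (k + l) z.2.2.2)) (by fun_prop) ha ?_
    rintro _ ⟨y, m, n, rfl⟩
    refine ⟨y, k + m, l + n, ?_⟩
    have e : k + m + (l + n) = (k + l) + (m + n) := by ring
    rw [e, iterZ_add' T k m, iterZ_add' T l n, iterZ_add' T (k + l) (m + n)]
  have h := map_mem_closure (f := fun z : X × X × X => (x, z)) (by fun_prop) hb this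
  rwa [Para, closure_closure] at h

/-- `𝒫` is stable under `T × T × id × id`. -/
theorem para_orb2 {X : Type*} [TopologicalSpace X] (T : X ≃ₜ X)
    (a b y : X × X) (ha : (a.1, a.2, y) ∈ Para T) (hb : b ∈ orb2 T a) :
    (b.1, b.2, y) ∈ Para T := by
  have : Set.MapsTo (fun z : X × X => (z.1, z.2, y))
      {z | ∃ k : ℤ, z = (iterZ T k a.1, iterZ T k a.2)} (Para T) := by
    rintro _ ⟨k, rfl⟩
    have := iterZ_cont T k
    refine map_mem_closure (f := fun z : X × X × X × X =>
      (iterZ T k z.1, iterZ T k z.2.1, z.2.2.1, z.2.2.2)) (by fun_prop) ha ?_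
    rintro _ ⟨y, m, n, rfl⟩
    refine ⟨iterZ T k y, m, n - k, ?_⟩
    have e1 : k + m = m + k := by ring
    have e2 : n - k + k = n := by ring
    have e3 : m + (n - k) + k = m + n := by ring
    simp only [← iterZ_add', e1, e2, e3]
  have h := map_mem_closure (f := fun z : X × X => (z.1, z.2, y)) (by fun_prop) hb this
  rwa [Para, closure_closure] at h

/-- A generic point of `X × X`. -/
theorem exists_good {X : Type*} [MetricSpace X] [CompactSpace X] [Nonempty X] (T : X ≃ₜ X) :
    ∃ c : X × X, ∀ y : X × X, (c.1, c.2, y) ∈ Para T → y ∈ orb2 T c := by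
  obtain ⟨B, hBc, -, hB⟩ := TopologicalSpace.exists_countable_basis (X × X)
  let S : ℤ → X × X → X × X := fun k z => (iterZ T k z.1, iterZ T k z.2)
  have hS : ∀ k, Continuous (S k) := fun k => by
    have := iterZ_cont T k
    fun_prop
  let W : Set (X × X) → Set (X × X) := fun U => ⋃ k : ℤ, S k ⁻¹' U
  have hW : ∀ U ∈ B, IsOpen (W U) := fun U hU =>
    isOpen_iUnion fun k => (hB.isOpen hU).preimage (hS k)
  have hdense : Dense (⋂ U ∈ B, (frontier (W U))ᶜ) := by
    apply dense_biInter_of_isOpen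
    · intro U hU
      exact isClosed_frontier.isOpen_compl
    · exact hBc
    · intro U hU
      rw [← interior_eq_empty_iff_dense_compl]
      rw [← frontier_compl]
      exact interior_frontier (hW U hU).isClosed_compl
  obtain ⟨c, hc⟩ := hdense.nonempty
  refine ⟨c, fun y hy => ?_⟩
  rw [orb2, hB.mem_closure_iff]
  intro U hU hyU
  have hcU : c ∉ frontier (W U) := by
    simp only [Set.mem_iInter] at hc
    exact hc U hU
  have hcl : c ∈ closure (W U) := by
    rw [mem_closure_iff]
    intro V hV hcV
    rw [Para, mem_closure_iff] at hy
    obtain ⟨_, ⟨hq1, hq2⟩, x, m, n, rfl⟩ := hy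
      {q | (q.1, q.2.1) ∈ V ∧ (q.2.2.1, q.2.2.2) ∈ U}
      ((hV.preimage (f := fun q : X × X × X × X => (q.1, q.2.1)) (by fun_prop)).inter
        ((hB.isOpen hU).preimage (f := fun q : X × X × X × X => (q.2.2.1, q.2.2.2))
          (by fun_prop))) ⟨hcV, hyU⟩
    refine ⟨(x, iterZ T m x), hq1, Set.mem_iUnion.2 ⟨n, ?_⟩⟩
    show (iterZ T n x, iterZ T n (iterZ T m x)) ∈ U
    rw [← iterZ_add', add_comm n m]
    exact hq2
  have hcW : c ∈ W U := by
    by_contra hn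
    exact hcU ⟨hcl, by rwa [(hW U hU).interior_eq]⟩
  obtain ⟨k, hk⟩ := Set.mem_iUnion.1 hcW
  exact ⟨S k c, hk, k, rfl⟩

/-- In a distal minimal system, `(x0,x1,x2,x3) ∈ 𝒫` iff there are integer sequences
`(mᵢ)`, `(nᵢ)` with `T^{mᵢ}x0 → x1`, `T^{nᵢ}x0 → x2` and `T^{mᵢ+nᵢ}x0 → x3`. -/
theorem stmt10 {X : Type*} [MetricSpace X] [CompactSpace X] [Nonempty X]
    (T : X ≃ₜ X) (hdistal : IsDistal T) (hmin : IsMinimal T) (x0 x1 x2 x3 : X) :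
    (x0, x1, x2, x3) ∈ Para T ↔
      ∃ m n : ℕ → ℤ,
        Tendsto (fun i => iterZ T (m i) x0) atTop (𝓝 x1) ∧
        Tendsto (fun i => iterZ T (n i) x0) atTop (𝓝 x2) ∧
        Tendsto (fun i => iterZ T (m i + n i) x0) atTop (𝓝 x3) := by
  have hself : ∀ x : X, (x, x, x, x) ∈ Para T := fun x =>
    subset_closure ⟨x, 0, 0, by simp [iterZ_zero']⟩
  constructor
  · intro h
    obtain ⟨c, hc⟩ := exists_good T
    -- a pair `(x0, w)` in the orbit closure of `c`
    obtain ⟨w, hw⟩ : ∃ w, (x0, w) ∈ orb2 T c := by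
      have hcl : IsClosed (Prod.fst '' orb2 T c) :=
        ((isClosed_closure (X := X × X)).isCompact.image continuous_fst).isClosed
      have hsub : (Set.range fun n : ℤ => iterZ T n c.1) ⊆ Prod.fst '' orb2 T c := by
        rintro _ ⟨k, rfl⟩
        exact ⟨_, subset_closure ⟨k, rfl⟩, rfl⟩
      obtain ⟨⟨p, w⟩, hp, hpe⟩ := closure_minimal hsub hcl (hmin c.1 x0)
      simp only at hpe
      subst hpe
      exact ⟨w, hp⟩
    have key : ∀ a : X × X × X, (x0, a) ∈ Para T → (w, x0, w) ∈ orb3 T a := by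
      intro a ha
      obtain ⟨b, hb⟩ : ∃ b, (w, b) ∈ orb3 T a := by
        have hcl : IsClosed (Prod.fst '' orb3 T a) :=
          ((isClosed_closure (X := X × X × X)).isCompact.image continuous_fst).isClosed
        have hsub : (Set.range fun n : ℤ => iterZ T n a.1) ⊆ Prod.fst '' orb3 T a := by
          rintro _ ⟨k, rfl⟩
          exact ⟨_, subset_closure ⟨k, 0, rfl⟩, rfl⟩
        obtain ⟨⟨p, b⟩, hp, hpe⟩ := closure_minimal hsub hcl (hmin a.1 w)
        simp only at hpe
        subst hpe
        exact ⟨b, hp⟩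
      have h1 : (x0, w, b) ∈ Para T := para_orb3 T x0 a (w, b) ha hb
      have h2 : (c.1, c.2, b) ∈ Para T :=
        para_orb2 T (x0, w) c b h1 (orb2_symm T hdistal _ _ hw)
      have h3 : b ∈ orb2 T c := hc b h2
      have h4 : (x0, w) ∈ orb2 T b := orb2_trans T _ _ _ (orb2_symm T hdistal _ _ h3) hw
      refine orb3_trans T _ _ _ hb ?_
      refine map_mem_closure (f := fun z : X × X => (w, z)) (by fun_prop) h4 ?_
      rintro _ ⟨k, rfl⟩
      exact ⟨0, k, by simp [iterZ_zero']⟩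
    have hfin : (x1, x2, x3) ∈ orb3 T (x0, x0, x0) :=
      orb3_trans T _ _ _ (key _ (hself x0)) (orb3_symm T hdistal _ _ (key _ h))
    obtain ⟨s, hs, hlim⟩ := mem_closure_iff_seq_limit.1 hfin
    choose m n hmn using hs
    refine ⟨m, n, ?_, ?_, ?_⟩
    · have := (continuous_fst.tendsto _).comp hlim
      refine this.congr fun i => ?_
      simp [hmn i]
    · have := ((continuous_fst.comp continuous_snd).tendsto _).comp hlim
      refine this.congr fun i => ?_
      simp [hmn i]
    · have := ((continuous_snd.comp continuous_snd).tendsto _).comp hlim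
      refine this.congr fun i => ?_
      simp [hmn i]
  · rintro ⟨m, n, h1, h2, h3⟩
    refine mem_closure_of_tendsto
      (tendsto_const_nhds.prodMk_nhds (h1.prodMk_nhds (h2.prodMk_nhds h3)))
      (Eventually.of_forall fun i => ⟨x0, m i, n i, rfl⟩)
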